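/- Let N ≥ 1, a ≥ 0, b > 0, and set α = a+b−1 and β = b−1. For each κ > 0 let X̃_κ be a random vector with distribution μ̃_κ (the trigonometric β-Jacobi ensemble), and let z_1 < ... < z_N be the ordered zeros of the Jacobi polynomial P_N^{(α,β)}. Then X̃_κ converges in probability as κ → ∞ to the point ((1/2)arccos(z_1), ..., (1/2)arccos(z_N)). -/

import Mathlib

open MeasureTheory Filter Real Finset Topology

/-!
In the coordinates `x = cos (2 * t)` the density is the `κ`-th power of a fixed product of powers
of the affine forms `x j - x i`, `1 - x i` and `1 + x i`. Its maximiser is found in two steps.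

* Write `P = (X - z i) Q` and let `w` be the Jacobi weight. Orthogonality of `P` gives
  `∫ T Q w = T (z i) ∫ Q w` whenever `deg T ≤ N`. With `T = Q` this shows `∫ Q w ≠ 0`; with
  `T Q w = ((1 - x²) Q² w)'` it gives `T (z i) = 0`, which is Stieltjes' electrostatic equilibrium
  equation at `z i`.
* Each affine form satisfies `u ≤ v * exp ((u - v) / v)`. When these bounds are multiplied, the
  exponents add up to the logarithmic derivative at `z`, which vanishes at an equilibrium; so the
  equilibrium is the unique maximiser.

Laplace's method then concentrates the `κ`-th power at the maximiser.
-/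

section Laplace

variable {X : Type*} [TopologicalSpace X] [TopologicalSpace.MetrizableSpace X] [MeasurableSpace X]
  [BorelSpace X] {μ : Measure X} [IsLocallyFiniteMeasure μ] {K S U : Set X} {c : X → ℝ} {x₀ : X}

lemma setIntegral_rpow_le_of_exponent_ge (hK : IsCompact K) (hS : S ⊆ K) (hSm : MeasurableSet S)
    (hc : ContinuousOn c K) (hc_nonneg : ∀ x ∈ K, 0 ≤ c x) (hc_le_one : ∀ x ∈ K, c x ≤ 1)
    {r s : ℝ} (hr : 0 ≤ r) (hrs : r ≤ s) :
    ∫ x in S, c x ^ s ∂μ ≤ ∫ x in S, c x ^ r ∂μ := by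
  have hint {κ : ℝ} (hκ : 0 ≤ κ) : IntegrableOn (fun x => c x ^ κ) S μ :=
    ((hc.rpow_const fun _ _ => Or.inr hκ).integrableOn_compact hK).mono_set hS
  exact setIntegral_mono_on (hint (hr.trans hrs)) (hint hr) hSm fun x hx =>
    rpow_le_rpow_of_exponent_ge' (hc_nonneg x (hS hx)) (hc_le_one x (hS hx)) hr hrs

variable [μ.IsOpenPosMeasure]

lemma tendsto_setIntegral_pow_succ_div_of_unique_maximum (hK : IsCompact K)
    (hx₀ : x₀ ∈ closure (interior K)) (hc : ContinuousOn c K) (hc_nonneg : ∀ x ∈ K, 0 ≤ c x)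
    (hc_pos : 0 < c x₀) (hc_max : ∀ x ∈ K, x ≠ x₀ → c x < c x₀) :
    Tendsto (fun n : ℕ => (∫ x in K, c x ^ (n + 1) ∂μ) / ∫ x in K, c x ^ n ∂μ) atTop
      (𝓝 (c x₀)) := by
  simpa only [smul_eq_mul, ← pow_succ, inv_mul_eq_div] using
    tendsto_setIntegral_pow_smul_of_unique_maximum_of_isCompact_of_continuousOn (μ := μ)
      hK hc hc_max hc_nonneg hc_pos hx₀ hc

lemma tendsto_setIntegral_sdiff_pow_div_of_unique_maximum (hK : IsCompact K)
    (hx₀ : x₀ ∈ closure (interior K)) (hU : U ∈ 𝓝 x₀) (hUm : MeasurableSet U)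
    (hc : ContinuousOn c K) (hc_nonneg : ∀ x ∈ K, 0 ≤ c x) (hc_pos : 0 < c x₀)
    (hc_max : ∀ x ∈ K, x ≠ x₀ → c x < c x₀) :
    Tendsto (fun n : ℕ => (∫ x in K \ U, c x ^ n ∂μ) / ∫ x in K, c x ^ n ∂μ) atTop (𝓝 0) := by
  set g : X → ℝ := Uᶜ.indicator 1 with hg
  have hg_int : IntegrableOn g K μ :=
    (integrableOn_const hK.measure_lt_top.ne).indicator hUm.compl
  have hg_zero : g =ᶠ[𝓝 x₀] fun _ => 0 := by
    filter_upwards [hU] with x hx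
    exact Set.indicator_of_notMem (Set.notMem_compl_iff.2 hx) _
  have hg_cont : ContinuousWithinAt g K x₀ :=
    (continuousAt_const.congr hg_zero.symm).continuousWithinAt
  have hpeak := tendsto_setIntegral_pow_smul_of_unique_maximum_of_isCompact_of_integrableOn
    (μ := μ) hK hc hc_max hc_nonneg hc_pos hx₀ hg_int hg_cont
  rw [hg_zero.eq_of_nhds] at hpeak
  refine hpeak.congr fun n => ?_
  have hpow_mul : (fun x => c x ^ n • g x) = Uᶜ.indicator (fun x => c x ^ n) := by
    ext x
    by_cases hx : x ∈ U <;> simp [hg, hx]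
  rw [hpow_mul, setIntegral_indicator hUm.compl, smul_eq_mul, inv_mul_eq_div, Set.sdiff_eq]

lemma tendsto_setIntegral_sdiff_pow_div_pow_succ_of_unique_maximum (hK : IsCompact K)
    (hx₀ : x₀ ∈ closure (interior K)) (hU : U ∈ 𝓝 x₀) (hUm : MeasurableSet U)
    (hc : ContinuousOn c K) (hc_nonneg : ∀ x ∈ K, 0 ≤ c x) (hc_pos : 0 < c x₀)
    (hc_max : ∀ x ∈ K, x ≠ x₀ → c x < c x₀) :
    Tendsto (fun n : ℕ => (∫ x in K \ U, c x ^ n ∂μ) / ∫ x in K, c x ^ (n + 1) ∂μ) atTop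
      (𝓝 0) := by
  have hsdiff := tendsto_setIntegral_sdiff_pow_div_of_unique_maximum (μ := μ)
    hK hx₀ hU hUm hc hc_nonneg hc_pos hc_max
  have hsucc := tendsto_setIntegral_pow_succ_div_of_unique_maximum (μ := μ)
    hK hx₀ hc hc_nonneg hc_pos hc_max
  rw [← zero_div (c x₀)]
  refine (hsdiff.div hsucc hc_pos.ne').congr' ?_
  filter_upwards [hsucc.eventually_ne hc_pos.ne'] with n hn
  exact div_div_div_cancel_right₀ (div_ne_zero_iff.1 hn).2 _ _

lemma tendsto_setIntegral_sdiff_rpow_div_of_unique_maximum_eq_one (hK : IsCompact K)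
    (hx₀ : x₀ ∈ closure (interior K)) (hU : U ∈ 𝓝 x₀) (hUm : MeasurableSet U)
    (hc : ContinuousOn c K) (hc_nonneg : ∀ x ∈ K, 0 ≤ c x) (hc_one : c x₀ = 1)
    (hc_max : ∀ x ∈ K, x ≠ x₀ → c x < c x₀) :
    Tendsto (fun κ : ℝ => (∫ x in K \ U, c x ^ κ ∂μ) / ∫ x in K, c x ^ κ ∂μ) atTop (𝓝 0) := by
  have hc_pos : 0 < c x₀ := hc_one ▸ one_pos
  have hc_le_one : ∀ x ∈ K, c x ≤ 1 := fun x hx => by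
    rcases eq_or_ne x x₀ with rfl | hne
    · exact hc_one.le
    · exact hc_one ▸ (hc_max x hx hne).le
  have hKm := hK.measurableSet
  have hKUm := hKm.diff hUm
  have hnonneg {S : Set X} (hS : S ⊆ K) (hSm : MeasurableSet S) (r : ℝ) :
      0 ≤ ∫ x in S, c x ^ r ∂μ :=
    setIntegral_nonneg hSm fun x hx => rpow_nonneg (hc_nonneg x (hS hx)) r
  have hanti {S : Set X} (hS : S ⊆ K) (hSm : MeasurableSet S) {r s : ℝ} (hr : 0 ≤ r)
      (hrs : r ≤ s) : ∫ x in S, c x ^ s ∂μ ≤ ∫ x in S, c x ^ r ∂μ :=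
    setIntegral_rpow_le_of_exponent_ge hK hS hSm hc hc_nonneg hc_le_one hr hrs
  have hwhole_ne := (tendsto_nat_floor_atTop (α := ℝ)).eventually
    ((tendsto_setIntegral_pow_succ_div_of_unique_maximum (μ := μ)
      hK hx₀ hc hc_nonneg hc_pos hc_max).eventually_ne hc_pos.ne')
  -- `c ≤ 1`, so exponent `κ` in the quotient may be replaced by `⌊κ⌋₊` above and `⌊κ⌋₊ + 1` below.
  refine squeeze_zero' (.of_forall fun κ => div_nonneg (hnonneg Set.sdiff_subset hKUm κ)
    (hnonneg subset_rfl hKm κ)) ?_ ((tendsto_setIntegral_sdiff_pow_div_pow_succ_of_unique_maximum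
      (μ := μ) hK hx₀ hU hUm hc hc_nonneg hc_pos hc_max).comp tendsto_nat_floor_atTop)
  filter_upwards [eventually_ge_atTop 0, hwhole_ne] with κ hκ hne
  have hsdiff_le := hanti Set.sdiff_subset hKUm (Nat.cast_nonneg ⌊κ⌋₊) (Nat.floor_le hκ)
  have hle_whole := hanti subset_rfl hKm hκ (Nat.lt_floor_add_one κ).le
  have hwhole_pos := (hnonneg subset_rfl hKm (⌊κ⌋₊ + 1 : ℕ)).lt_of_ne'
  simp only [← Nat.cast_succ, rpow_natCast] at hsdiff_le hle_whole hwhole_pos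
  exact div_le_div₀ (by simpa using hnonneg Set.sdiff_subset hKUm ⌊κ⌋₊) hsdiff_le
    (hwhole_pos (div_ne_zero_iff.1 hne).1) hle_whole

theorem tendsto_setIntegral_sdiff_rpow_div_of_unique_maximum (hK : IsCompact K)
    (hx₀ : x₀ ∈ closure (interior K)) (hU : U ∈ 𝓝 x₀) (hUm : MeasurableSet U)
    (hc : ContinuousOn c K) (hc_nonneg : ∀ x ∈ K, 0 ≤ c x) (hc_pos : 0 < c x₀)
    (hc_max : ∀ x ∈ K, x ≠ x₀ → c x < c x₀) :
    Tendsto (fun κ : ℝ => (∫ x in K \ U, c x ^ κ ∂μ) / ∫ x in K, c x ^ κ ∂μ) atTop (𝓝 0) := by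
  have hscaled := tendsto_setIntegral_sdiff_rpow_div_of_unique_maximum_eq_one (μ := μ)
    (c := fun x => c x / c x₀) hK hx₀ hU hUm (hc.div_const _)
    (fun x hx => div_nonneg (hc_nonneg x hx) hc_pos.le) (div_self hc_pos.ne')
    (fun x hx hne => div_lt_div_of_pos_right (hc_max x hx hne) hc_pos)
  refine hscaled.congr fun κ => ?_
  have hpull {S : Set X} (hS : S ⊆ K) (hSm : MeasurableSet S) :
      ∫ x in S, (c x / c x₀) ^ κ ∂μ = (∫ x in S, c x ^ κ ∂μ) / c x₀ ^ κ := by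
    rw [← integral_div]
    exact setIntegral_congr_fun hSm fun x hx => div_rpow (hc_nonneg x (hS hx)) hc_pos.le κ
  rw [hpull Set.sdiff_subset (hK.measurableSet.diff hUm), hpull subset_rfl hK.measurableSet,
    div_div_div_cancel_right₀ (rpow_pos_of_pos hc_pos κ).ne']

end Laplace

section Polynomial

open Polynomial

lemma map_mul_eq_eval_mul_map_of_orthogonal {R : Type*} [CommRing R] (L : R[X] →ₗ[R] R)
    {Q : R[X]} {y : R}
    (horth : ∀ S : R[X], S.natDegree ≤ Q.natDegree → L ((X - C y) * Q * S) = 0)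
    {T : R[X]} (hT : T.natDegree ≤ Q.natDegree + 1) : L (T * Q) = T.eval y * L Q := by
  nontriviality R
  have hquot : (T /ₘ (X - C y)).natDegree ≤ Q.natDegree := by
    rw [natDegree_divByMonic _ (monic_X_sub_C y), natDegree_X_sub_C]
    omega
  have hdecomp : T * Q = T.eval y • Q + (X - C y) * Q * (T /ₘ (X - C y)) := by
    nth_rw 1 [← modByMonic_add_div T (X - C y), modByMonic_X_sub_C_eq_C_eval, smul_eq_C_mul]
    ring
  rw [hdecomp, map_add, map_smul, horth _ hquot, add_zero, smul_eq_mul]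

lemma eval_derivative_nodal {ι F : Type*} [Field F] {s : Finset ι} {v : ι → F}
    {y : F} (hy : ∀ i ∈ s, y ≠ v i) :
    (derivative (Lagrange.nodal s v)).eval y =
      (Lagrange.nodal s v).eval y * ∑ i ∈ s, (y - v i)⁻¹ := by
  classical
  rw [Lagrange.derivative_nodal, eval_finsetSum, mul_sum]
  refine sum_congr rfl fun i hi => ?_
  rw [Lagrange.nodal_eq_mul_nodal_erase hi, eval_mul, eval_sub, eval_X, eval_C]
  field_simp [sub_ne_zero.2 (hy i hi)]

lemma eq_C_leadingCoeff_mul_nodal {ι F : Type*} [Field F] [Fintype ι] {P : F[X]} {z : ι → F}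
    (hdeg : P.natDegree = Fintype.card ι) (hz : Function.Injective z)
    (hroot : ∀ i, P.eval (z i) = 0) : P = C P.leadingCoeff * Lagrange.nodal univ z := by
  have hdvd : Lagrange.nodal univ z ∣ P :=
    prod_dvd_of_coprime (fun _ _ _ _ hij => pairwise_coprime_X_sub_C hz hij)
      fun i _ => dvd_iff_isRoot.2 (hroot i)
  rw [mul_comm]
  exact eq_mul_leadingCoeff_of_monic_of_dvd_of_natDegree_le Lagrange.nodal_monic hdvd
    (by rw [hdeg, Lagrange.natDegree_nodal, card_univ])

end Polynomial

section JacobiFunctional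

open Polynomial

variable {α β : ℝ}

/-- The Jacobi weight on `(-1, 1)` with parameters `α` and `β`. -/
noncomputable def jacobiWeight (α β x : ℝ) : ℝ := (1 - x) ^ α * (1 + x) ^ β

lemma jacobiWeight_pos {x : ℝ} (hx : x ∈ Set.Ioo (-1 : ℝ) 1) : 0 < jacobiWeight α β x :=
  mul_pos (rpow_pos_of_pos (by linarith [hx.2]) _) (rpow_pos_of_pos (by linarith [hx.1]) _)

lemma intervalIntegrable_mul_jacobiWeight (hα : -1 < α) (hβ : -1 < β) {f : ℝ → ℝ}
    (hf : Continuous f) :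
    IntervalIntegrable (fun x => f x * jacobiWeight α β x) volume (-1) 1 := by
  have hright : IntervalIntegrable (fun x : ℝ => (1 - x) ^ α) volume 0 1 := by
    simpa using (intervalIntegral.intervalIntegrable_rpow' (a := 1) (b := 0) hα).comp_sub_left 1
  have hleft : IntervalIntegrable (fun x : ℝ => (1 + x) ^ β) volume (-1) 0 := by
    simpa using (intervalIntegral.intervalIntegrable_rpow' (a := 0) (b := 1) hβ).comp_add_left 1
  refine IntervalIntegrable.trans (b := 0) ?_ ?_
  · have hcont : ContinuousOn (fun x => f x * (1 - x) ^ α) (Set.uIcc (-1) 0) := by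
      refine hf.continuousOn.mul (.rpow_const (by fun_prop) fun x hx => Or.inl ?_)
      rw [Set.uIcc_of_le (by norm_num)] at hx
      linarith [hx.2]
    exact (hleft.continuousOn_mul hcont).congr fun x _ => mul_assoc _ _ _
  · have hcont : ContinuousOn (fun x => f x * (1 + x) ^ β) (Set.uIcc 0 1) := by
      refine hf.continuousOn.mul (.rpow_const (by fun_prop) fun x hx => Or.inl ?_)
      rw [Set.uIcc_of_le (by norm_num)] at hx
      linarith [hx.1]
    exact (hright.continuousOn_mul hcont).congr fun x _ => by simp only [jacobiWeight]; ring

lemma integrableOn_eval_mul_jacobiWeight (hα : -1 < α) (hβ : -1 < β) (p : ℝ[X]) :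
    IntegrableOn (fun x => p.eval x * jacobiWeight α β x) (Set.Ioo (-1) 1) :=
  (intervalIntegrable_iff_integrableOn_Ioo_of_le (by norm_num)).1
    (intervalIntegrable_mul_jacobiWeight hα hβ p.continuous)

/-- Integration of polynomials against the Jacobi weight, as a linear functional. The bounds on
`α` and `β` make every polynomial integrable. -/
noncomputable def jacobiFunctional (hα : -1 < α) (hβ : -1 < β) : ℝ[X] →ₗ[ℝ] ℝ where
  toFun p := ∫ x in Set.Ioo (-1) 1, p.eval x * jacobiWeight α β x
  map_add' p q := by
    simp only [eval_add, add_mul]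
    exact integral_add (integrableOn_eval_mul_jacobiWeight hα hβ p)
      (integrableOn_eval_mul_jacobiWeight hα hβ q)
  map_smul' r p := by
    simp only [eval_smul, smul_eq_mul, mul_assoc, integral_const_mul, RingHom.id_apply]

lemma jacobiFunctional_apply (hα : -1 < α) (hβ : -1 < β) (p : ℝ[X]) :
    jacobiFunctional hα hβ p = ∫ x in Set.Ioo (-1) 1, p.eval x * jacobiWeight α β x := rfl

lemma jacobiFunctional_mul_self_pos (hα : -1 < α) (hβ : -1 < β) {Q : ℝ[X]} (hQ : Q ≠ 0) :
    0 < jacobiFunctional hα hβ (Q * Q) := by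
  have hnonneg : 0 ≤ᵐ[volume.restrict (Set.Ioo (-1) 1)]
      fun x => (Q * Q).eval x * jacobiWeight α β x := by
    filter_upwards [ae_restrict_mem measurableSet_Ioo] with x hx
    rw [eval_mul]
    exact mul_nonneg (mul_self_nonneg _) (jacobiWeight_pos hx).le
  rw [jacobiFunctional_apply, setIntegral_pos_iff_support_of_nonneg_ae hnonneg
    (integrableOn_eval_mul_jacobiWeight hα hβ _)]
  have hsupport : Set.Ioo (-1 : ℝ) 1 \ (Q.roots.toFinset : Set ℝ) ⊆
      Function.support (fun x => (Q * Q).eval x * jacobiWeight α β x) ∩ Set.Ioo (-1) 1 := by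
    rintro x ⟨hx, hroot⟩
    have hQx : Q.eval x ≠ 0 := by simpa [hQ] using hroot
    refine ⟨?_, hx⟩
    rw [Function.mem_support, eval_mul]
    exact mul_ne_zero (mul_self_ne_zero.2 hQx) (jacobiWeight_pos hx).ne'
  refine lt_of_lt_of_le ?_ (measure_mono hsupport)
  rw [measure_sdiff_null (Finset.measure_zero _ _)]
  simp

lemma hasDerivAt_mul_jacobiWeight_add_one {f : ℝ → ℝ} {f' x : ℝ} (hf : HasDerivAt f f' x)
    (hx : x ∈ Set.Ioo (-1 : ℝ) 1) :
    HasDerivAt (fun x => f x * jacobiWeight (α + 1) (β + 1) x)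
      (((1 - x ^ 2) * f' + ((β + 1) * (1 - x) - (α + 1) * (1 + x)) * f x) * jacobiWeight α β x)
      x := by
  have hsub : 1 - x ≠ 0 := by linarith [hx.2]
  have hadd : 1 + x ≠ 0 := by linarith [hx.1]
  have hderiv := hf.mul ((((hasDerivAt_id x).const_sub 1).rpow_const (p := α + 1) (.inl hsub)).mul
    (((hasDerivAt_id x).const_add 1).rpow_const (p := β + 1) (.inl hadd)))
  refine hderiv.congr_deriv ?_
  simp only [id, jacobiWeight, Pi.mul_apply, add_sub_cancel_right, rpow_add_one hsub,
    rpow_add_one hadd]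
  ring

/-- The integrand is the derivative of `G` times the weight with parameters `α + 1` and `β + 1`,
which vanishes at `±1`. -/
lemma jacobiFunctional_pearson (hα : -1 < α) (hβ : -1 < β) (G : ℝ[X]) :
    jacobiFunctional hα hβ ((1 - X ^ 2) * derivative G +
      (C (β + 1) * (1 - X) - C (α + 1) * (1 + X)) * G) = 0 := by
  have hα_ne : α + 1 ≠ 0 := by linarith
  have hβ_ne : β + 1 ≠ 0 := by linarith
  have hcont : ContinuousOn (fun x => G.eval x * jacobiWeight (α + 1) (β + 1) x)
      (Set.Icc (-1) 1) := by
    refine G.continuous.continuousOn.mul (.mul ?_ ?_)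
    · exact .rpow_const (by fun_prop) fun _ _ => .inr (by linarith)
    · exact .rpow_const (by fun_prop) fun _ _ => .inr (by linarith)
  rw [jacobiFunctional_apply, ← integral_Ioc_eq_integral_Ioo,
    ← intervalIntegral.integral_of_le (by norm_num),
    intervalIntegral.integral_eq_sub_of_hasDerivAt_of_le (by norm_num) hcont
      (fun x hx => ?_) (intervalIntegrable_mul_jacobiWeight hα hβ (Polynomial.continuous _))]
  · simp [jacobiWeight, hα_ne, hβ_ne]
  · simpa using hasDerivAt_mul_jacobiWeight_add_one (G.hasDerivAt x) hx

lemma critical_equation_of_orthogonal (hα : -1 < α) (hβ : -1 < β) {Q : ℝ[X]} {y : ℝ} (hQ : Q ≠ 0)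
    (horth : ∀ S : ℝ[X], S.natDegree ≤ Q.natDegree →
      jacobiFunctional hα hβ ((X - C y) * Q * S) = 0) :
    2 * (1 - y ^ 2) * (derivative Q).eval y +
      ((β + 1) * (1 - y) - (α + 1) * (1 + y)) * Q.eval y = 0 := by
  set L := jacobiFunctional hα hβ
  set T : ℝ[X] := C 2 * (1 - X ^ 2) * derivative Q +
    (C (β + 1) * (1 - X) - C (α + 1) * (1 + X)) * Q with hT
  have hLQ_ne : L Q ≠ 0 := by
    have hQQ := map_mul_eq_eval_mul_map_of_orthogonal L horth Q.natDegree.le_succ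
    exact right_ne_zero_of_mul (hQQ ▸ (jacobiFunctional_mul_self_pos hα hβ hQ).ne')
  have hT_deg : T.natDegree ≤ Q.natDegree + 1 := by
    have hquad : (C 2 * (1 - X ^ 2) : ℝ[X]).natDegree ≤ 2 := by compute_degree
    have hlin : (C (β + 1) * (1 - X) - C (α + 1) * (1 + X)).natDegree ≤ 1 := by compute_degree
    refine natDegree_add_le_of_degree_le ?_ ?_
    · rcases Nat.eq_zero_or_pos Q.natDegree with hzero | hpos
      · simp [derivative_of_natDegree_zero hzero]
      · have := natDegree_derivative_lt hpos.ne'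
        exact natDegree_mul_le.trans (by omega)
    · exact natDegree_mul_le.trans (by omega)
  have hLTQ : L (T * Q) = 0 := by
    rw [← jacobiFunctional_pearson hα hβ (Q * Q), derivative_mul, hT, C_ofNat]
    congr 1
    ring
  rw [map_mul_eq_eval_mul_map_of_orthogonal L horth hT_deg] at hLTQ
  simpa [hT] using (mul_eq_zero.1 hLTQ).resolve_right hLQ_ne

end JacobiFunctional

section Equilibrium

variable {N : ℕ} {p q : ℝ} {x z : Fin N → ℝ}

/-- The unnormalised density of `N` ordered particles in `[-1, 1]`, with charges `p` at `1` and `q`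
at `-1`, at unit inverse temperature. -/
noncomputable def jacobiProduct (p q : ℝ) (x : Fin N → ℝ) : ℝ :=
  (∏ r : Fin N × Fin N with r.1 < r.2, (x r.2 - x r.1)) *
    ∏ i, ((1 - x i) ^ p * (1 + x i) ^ q)

/-- Stieltjes' equilibrium of `N` unit charges in `(-1, 1)` subject to fixed charges `p` at `1` and
`q` at `-1`: the gradient of `log (jacobiProduct p q)` vanishes at `z`. -/
def IsJacobiEquilibrium (p q : ℝ) (z : Fin N → ℝ) : Prop :=
  ∀ i, ∑ j ∈ univ.erase i, (z i - z j)⁻¹ = p / (1 - z i) - q / (1 + z i)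

lemma isJacobiEquilibrium_of_orthogonal {α β : ℝ} (hα : -1 < α) (hβ : -1 < β) {P : Polynomial ℝ}
    (hdeg : P.natDegree = N)
    (horth : ∀ Q : Polynomial ℝ, Q.natDegree < N → jacobiFunctional hα hβ (P * Q) = 0)
    (hz : Function.Injective z) (hroot : ∀ i, P.eval (z i) = 0)
    (hmem : ∀ i, z i ∈ Set.Ioo (-1 : ℝ) 1) :
    IsJacobiEquilibrium ((α + 1) / 2) ((β + 1) / 2) z := by
  intro i
  have hN := i.pos
  set Q := Lagrange.nodal (univ.erase i) z
  have hP : P = P.leadingCoeff • ((Polynomial.X - Polynomial.C (z i)) * Q) := by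
    rw [← Lagrange.nodal_eq_mul_nodal_erase (mem_univ i), Polynomial.smul_eq_C_mul]
    exact eq_C_leadingCoeff_mul_nodal (by simpa using hdeg) hz hroot
  have hlead : P.leadingCoeff ≠ 0 :=
    Polynomial.leadingCoeff_ne_zero.2 (Polynomial.ne_zero_of_natDegree_gt (hdeg ▸ hN))
  have hQdeg : Q.natDegree < N := by
    simpa [Q, Lagrange.natDegree_nodal] using hN
  have hne : ∀ j ∈ univ.erase i, z i ≠ z j := fun j hj =>
    hz.ne (ne_of_mem_erase hj).symm
  have hcrit := critical_equation_of_orthogonal (y := z i) hα hβ Lagrange.nodal_ne_zero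
    fun S (hS : S.natDegree ≤ Q.natDegree) => by
      have hPS := horth S (hS.trans_lt hQdeg)
      rw [hP, smul_mul_assoc, map_smul] at hPS
      exact (smul_eq_zero.1 hPS).resolve_left hlead
  rw [eval_derivative_nodal hne] at hcrit
  have hQz : Q.eval (z i) ≠ 0 := Lagrange.eval_nodal_not_at_node hne
  have hsub : 1 - z i ≠ 0 := by linarith [(hmem i).2]
  have hadd : 1 + z i ≠ 0 := by linarith [(hmem i).1]
  generalize ∑ j ∈ univ.erase i, (z i - z j)⁻¹ = slope at hcrit ⊢
  have hfactor : Q.eval (z i) *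
      (2 * (1 - z i ^ 2) * slope + ((β + 1) * (1 - z i) - (α + 1) * (1 + z i))) = 0 := by
    linear_combination hcrit
  have hslope := (mul_eq_zero.1 hfactor).resolve_left hQz
  field_simp
  linear_combination hslope

lemma sum_filter_lt_eq_sum_off_diag (f : Fin N → Fin N → ℝ) :
    ∑ r : Fin N × Fin N with r.1 < r.2, (f r.2 r.1 + f r.1 r.2) =
      ∑ i, ∑ j ∈ univ.erase i, f j i := by
  have hIoi : ∀ i : Fin N, Ioi i = univ.filter (i < ·) := fun i => by ext; simp
  simp only [← compl_singleton]
  rw [← sum_sum_Ioi_add_eq_sum_sum_off_diag, sum_filter, Fintype.sum_prod_type]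
  simp only [hIoi, sum_filter]

lemma sum_filter_lt_sub_div_sub (d z : Fin N → ℝ) :
    ∑ r : Fin N × Fin N with r.1 < r.2, (d r.2 - d r.1) / (z r.2 - z r.1) =
      ∑ i, d i * ∑ j ∈ univ.erase i, (z i - z j)⁻¹ := by
  simp only [mul_sum]
  rw [← sum_filter_lt_eq_sum_off_diag fun j i => d i * (z i - z j)⁻¹]
  refine sum_congr rfl fun r _ => ?_
  rw [← neg_sub (z r.2), inv_neg]
  ring

lemma continuous_jacobiProduct (hp : 0 ≤ p) (hq : 0 ≤ q) :
    Continuous (jacobiProduct p q : (Fin N → ℝ) → ℝ) :=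
  (continuous_finsetProd _ fun _ _ => by fun_prop).mul <| continuous_finsetProd _ fun _ _ =>
    (Continuous.rpow_const (by fun_prop) fun _ => .inr hp).mul
      (Continuous.rpow_const (by fun_prop) fun _ => .inr hq)

lemma sub_nonneg_of_mem_filter_lt (hx : Monotone x) :
    ∀ r ∈ (univ.filter fun r : Fin N × Fin N => r.1 < r.2), 0 ≤ x r.2 - x r.1 :=
  fun _ hr => sub_nonneg.2 (hx (mem_filter.1 hr).2.le)

lemma jacobiFactor_nonneg {y : ℝ} (hy : y ∈ Set.Icc (-1 : ℝ) 1) :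
    0 ≤ (1 - y) ^ p * (1 + y) ^ q :=
  mul_nonneg (rpow_nonneg (by linarith [hy.2]) p) (rpow_nonneg (by linarith [hy.1]) q)

lemma jacobiFactor_pos {y : ℝ} (hy : y ∈ Set.Ioo (-1 : ℝ) 1) :
    0 < (1 - y) ^ p * (1 + y) ^ q :=
  mul_pos (rpow_pos_of_pos (by linarith [hy.2]) p) (rpow_pos_of_pos (by linarith [hy.1]) q)

lemma jacobiProduct_nonneg (hx : Monotone x) (hmem : ∀ i, x i ∈ Set.Icc (-1 : ℝ) 1) :
    0 ≤ jacobiProduct p q x :=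
  mul_nonneg (prod_nonneg (sub_nonneg_of_mem_filter_lt hx))
    (prod_nonneg fun i _ => jacobiFactor_nonneg (hmem i))

lemma jacobiProduct_pos (hx : StrictMono x) (hmem : ∀ i, x i ∈ Set.Ioo (-1 : ℝ) 1) :
    0 < jacobiProduct p q x :=
  mul_pos (prod_pos fun _ hr => sub_pos.2 (hx (mem_filter.1 hr).2))
    (prod_pos fun i _ => jacobiFactor_pos (hmem i))

lemma le_mul_exp_sub_div {u v : ℝ} (hv : 0 < v) : u ≤ v * exp ((u - v) / v) := by
  have h := add_one_le_exp ((u - v) / v)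
  rwa [div_add_one hv.ne', sub_add_cancel, div_le_iff₀' hv] at h

lemma lt_mul_exp_sub_div {u v : ℝ} (hv : 0 < v) (huv : u ≠ v) : u < v * exp ((u - v) / v) := by
  have h := add_one_lt_exp (div_ne_zero (sub_ne_zero.2 huv) hv.ne')
  rwa [div_add_one hv.ne', sub_add_cancel, div_lt_iff₀' hv] at h

lemma mul_exp_rpow {v : ℝ} (hv : 0 ≤ v) (s p : ℝ) : (v * exp s) ^ p = v ^ p * exp (p * s) := by
  rw [mul_rpow hv (exp_pos s).le, ← exp_mul, mul_comm s]

lemma jacobiFactor_lt {u v : ℝ} (hp : 0 < p) (hq : 0 < q) (hu : u ∈ Set.Icc (-1 : ℝ) 1)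
    (hv : v ∈ Set.Ioo (-1 : ℝ) 1) (huv : u ≠ v) :
    (1 - u) ^ p * (1 + u) ^ q <
      (1 - v) ^ p * (1 + v) ^ q * exp ((u - v) * (q / (1 + v) - p / (1 - v))) := by
  have hsub : 0 < 1 - v := by linarith [hv.2]
  have hadd : 0 < 1 + v := by linarith [hv.1]
  have hleft := rpow_lt_rpow (by linarith [hu.2])
    (lt_mul_exp_sub_div hsub (u := 1 - u) (by simpa using huv)) hp
  have hright := rpow_lt_rpow (by linarith [hu.1])
    (lt_mul_exp_sub_div hadd (u := 1 + u) (by simpa using huv)) hq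
  rw [mul_exp_rpow hsub.le] at hleft
  rw [mul_exp_rpow hadd.le] at hright
  refine (mul_lt_mul'' hleft hright (rpow_nonneg (by linarith [hu.2]) p)
    (rpow_nonneg (by linarith [hu.1]) q)).trans_eq ?_
  rw [mul_mul_mul_comm, ← exp_add]
  ring_nf

lemma prod_lt_prod_of_nonneg {ι : Type*} {s : Finset ι} {f g : ι → ℝ} (hf : ∀ i ∈ s, 0 ≤ f i)
    (hg : ∀ i ∈ s, 0 < g i) (hfg : ∀ i ∈ s, f i ≤ g i) (hlt : ∃ i ∈ s, f i < g i) :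
    ∏ i ∈ s, f i < ∏ i ∈ s, g i := by
  by_cases hpos : ∀ i ∈ s, 0 < f i
  · exact prod_lt_prod hpos hfg hlt
  · push Not at hpos
    obtain ⟨i, hi, hfi⟩ := hpos
    rw [prod_eq_zero hi (hfi.antisymm (hf i hi))]
    exact prod_pos hg

theorem IsJacobiEquilibrium.jacobiProduct_lt (hp : 0 < p) (hq : 0 < q)
    (hequi : IsJacobiEquilibrium p q z) (hz : StrictMono z) (hzmem : ∀ i, z i ∈ Set.Ioo (-1 : ℝ) 1)
    (hx : Monotone x) (hxmem : ∀ i, x i ∈ Set.Icc (-1 : ℝ) 1) (hne : x ≠ z) :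
    jacobiProduct p q x < jacobiProduct p q z := by
  let pairs := univ.filter fun r : Fin N × Fin N => r.1 < r.2
  have hgap_pos : ∀ r ∈ pairs, 0 < z r.2 - z r.1 := fun r hr => sub_pos.2 (hz (mem_filter.1 hr).2)
  set slope : Fin N → ℝ := fun i => ∑ j ∈ univ.erase i, (z i - z j)⁻¹
  have hpairs : ∏ r ∈ pairs, (x r.2 - x r.1) ≤
      (∏ r ∈ pairs, (z r.2 - z r.1)) * exp (∑ i, (x i - z i) * slope i) := by
    rw [← sum_filter_lt_sub_div_sub (fun i => x i - z i) z, exp_sum, ← prod_mul_distrib]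
    refine prod_le_prod (sub_nonneg_of_mem_filter_lt hx) fun r hr => ?_
    rw [sub_sub_sub_comm]
    exact le_mul_exp_sub_div (hgap_pos r hr)
  have hfactors : ∏ i, ((1 - x i) ^ p * (1 + x i) ^ q) <
      (∏ i, ((1 - z i) ^ p * (1 + z i) ^ q)) * exp (∑ i, (x i - z i) * -slope i) := by
    have hlt : ∀ i, x i ≠ z i → (1 - x i) ^ p * (1 + x i) ^ q <
        (1 - z i) ^ p * (1 + z i) ^ q * exp ((x i - z i) * -slope i) := fun i hi => by
      simpa only [slope, hequi i, neg_sub] using jacobiFactor_lt hp hq (hxmem i) (hzmem i) hi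
    rw [exp_sum, ← prod_mul_distrib]
    obtain ⟨k, hk⟩ := Function.ne_iff.1 hne
    refine prod_lt_prod_of_nonneg (fun i _ => jacobiFactor_nonneg (hxmem i))
      (fun i _ => mul_pos (jacobiFactor_pos (hzmem i)) (exp_pos _)) (fun i _ => ?_)
      ⟨k, mem_univ k, hlt k hk⟩
    rcases eq_or_ne (x i) (z i) with heq | hi
    · simp [heq]
    · exact (hlt i hi).le
  calc jacobiProduct p q x
    _ < (∏ r ∈ pairs, (z r.2 - z r.1)) * exp (∑ i, (x i - z i) * slope i) *
        ((∏ i, ((1 - z i) ^ p * (1 + z i) ^ q)) * exp (∑ i, (x i - z i) * -slope i)) :=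
      mul_lt_mul' hpairs hfactors (prod_nonneg fun i _ => jacobiFactor_nonneg (hxmem i))
        (mul_pos (prod_pos hgap_pos) (exp_pos _))
    _ = jacobiProduct p q z := by
      rw [mul_mul_mul_comm, ← exp_add]
      simp [jacobiProduct, pairs]

end Equilibrium

section TrigonometricCoordinates

variable {N : ℕ} {a b : ℝ} {t z : Fin N → ℝ}

/-- The closed alcove `π / 2 ≥ t₁ ≥ ... ≥ t_N ≥ 0`. -/
def trigAlcove (N : ℕ) : Set (Fin N → ℝ) :=
  {t | Antitone t ∧ ∀ i, t i ∈ Set.Icc (0 : ℝ) (π / 2)}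

/-- The unnormalised density of the trigonometric `β`-Jacobi ensemble at inverse temperature `κ`. -/
noncomputable def trigJacobiWeight (a b κ : ℝ) (t : Fin N → ℝ) : ℝ :=
  (∏ r : Fin N × Fin N with r.1 < r.2, (cos (2 * t r.2) - cos (2 * t r.1)) ^ κ) *
    ∏ i, (sin (t i) ^ (κ * a) * sin (2 * t i) ^ (κ * b))

lemma isCompact_trigAlcove : IsCompact (trigAlcove N) := by
  have hinter : trigAlcove N =
      {t | Antitone t} ∩ Set.univ.pi fun _ => Set.Icc (0 : ℝ) (π / 2) := by
    ext t
    simp only [trigAlcove, Set.mem_ofPred_eq, Set.mem_inter_iff, Set.mem_univ_pi]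
  rw [hinter]
  exact (isCompact_univ_pi fun _ => isCompact_Icc).inter_left isClosed_antitone

lemma isOpen_setOf_strictAnti : IsOpen {t : Fin N → ℝ | StrictAnti t} := by
  simp only [StrictAnti, Set.ofPred_forall]
  exact isOpen_iInter_of_finite fun i => isOpen_iInter_of_finite fun j =>
    isOpen_iInter_of_finite fun _ => isOpen_lt (continuous_apply j) (continuous_apply i)

lemma mem_interior_trigAlcove (ht : StrictAnti t) (hmem : ∀ i, t i ∈ Set.Ioo (0 : ℝ) (π / 2)) :
    t ∈ interior (trigAlcove N) := by
  have hopen : IsOpen ({t : Fin N → ℝ | StrictAnti t} ∩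
      Set.univ.pi fun _ => Set.Ioo (0 : ℝ) (π / 2)) :=
    isOpen_setOf_strictAnti.inter (isOpen_set_pi Set.finite_univ fun _ _ => isOpen_Ioo)
  refine interior_maximal (fun s hs => ?_) hopen ⟨ht, fun i _ => hmem i⟩
  exact ⟨StrictAnti.antitone hs.1, fun i => Set.Ioo_subset_Icc_self (hs.2 i trivial)⟩

lemma monotone_cos_two_mul_of_mem_trigAlcove (ht : t ∈ trigAlcove N) :
    Monotone fun i => cos (2 * t i) := fun i j hij =>
  cos_le_cos_of_nonneg_of_le_pi (by linarith [(ht.2 j).1]) (by linarith [(ht.2 i).2])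
    (by linarith [ht.1 hij])

lemma arccos_cos_two_mul_of_mem_trigAlcove (ht : t ∈ trigAlcove N) :
    (fun i => arccos (cos (2 * t i)) / 2) = t := by
  ext i
  rw [arccos_cos (by linarith [(ht.2 i).1]) (by linarith [(ht.2 i).2]),
    mul_div_cancel_left₀ _ two_ne_zero]

lemma cos_two_mul_arccos_div_two {y : ℝ} (hy : y ∈ Set.Icc (-1 : ℝ) 1) :
    cos (2 * (arccos y / 2)) = y := by
  rw [mul_div_cancel₀ _ two_ne_zero, cos_arccos hy.1 hy.2]

lemma arccos_div_two_mem_interior_trigAlcove (hz : StrictMono z)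
    (hmem : ∀ i, z i ∈ Set.Ioo (-1 : ℝ) 1) :
    (fun i => arccos (z i) / 2) ∈ interior (trigAlcove N) := by
  refine mem_interior_trigAlcove (fun i j hij => ?_) fun i => ⟨?_, ?_⟩
  · exact div_lt_div_of_pos_right
      (arccos_lt_arccos (hmem i).1.le (hz hij) (hmem j).2.le) two_pos
  · exact half_pos (arccos_pos.2 (hmem i).2)
  · exact div_lt_div_of_pos_right (arccos_lt_pi.2 (hmem i).1) two_pos

lemma sin_rpow_mul_sin_two_mul_rpow (hab : a + b ≠ 0) {s : ℝ} (hs : s ∈ Set.Icc (0 : ℝ) (π / 2)) :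
    sin s ^ a * sin (2 * s) ^ b =
      2 ^ (-(a / 2)) * ((1 - cos (2 * s)) ^ ((a + b) / 2) * (1 + cos (2 * s)) ^ (b / 2)) := by
  have hsin : 0 ≤ sin s := sin_nonneg_of_nonneg_of_le_pi hs.1 (by linarith [hs.2, pi_pos])
  have hcos : 0 ≤ cos s := cos_nonneg_of_neg_pi_div_two_le_of_le (by linarith [hs.1, pi_pos]) hs.2
  have hrpow_two_mul_sq {y : ℝ} (hy : 0 ≤ y) (p : ℝ) :
      (2 * y ^ 2) ^ (p / 2) = 2 ^ (p / 2) * y ^ p := by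
    rw [mul_rpow zero_le_two (sq_nonneg y), ← rpow_natCast_mul hy]
    congr 2
    push_cast
    ring
  have htwo : (2 : ℝ) ^ b = 2 ^ (-(a / 2)) * (2 ^ ((a + b) / 2) * 2 ^ (b / 2)) := by
    rw [← rpow_add two_pos, ← rpow_add two_pos]
    ring_nf
  have hsub : 1 - cos (2 * s) = 2 * sin s ^ 2 := by rw [cos_two_mul, cos_sq']; ring
  have hadd : 1 + cos (2 * s) = 2 * cos s ^ 2 := by rw [cos_two_mul]; ring
  rw [hsub, hadd, hrpow_two_mul_sq hsin, hrpow_two_mul_sq hcos, sin_two_mul,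
    mul_rpow (by positivity) hcos, mul_rpow zero_le_two hsin, rpow_add' hsin hab, htwo]
  ring

lemma trigJacobiWeight_eq_rpow (hab : a + b ≠ 0) (ht : t ∈ trigAlcove N) (κ : ℝ) :
    trigJacobiWeight a b κ t =
      ((2 ^ (-(a / 2))) ^ N * jacobiProduct ((a + b) / 2) (b / 2) fun i => cos (2 * t i)) ^ κ := by
  have hsin (i : Fin N) : 0 ≤ sin (t i) :=
    sin_nonneg_of_nonneg_of_le_pi (ht.2 i).1 (by linarith [(ht.2 i).2, pi_pos])
  have hsin_two (i : Fin N) : 0 ≤ sin (2 * t i) :=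
    sin_nonneg_of_nonneg_of_le_pi (by linarith [(ht.2 i).1]) (by linarith [(ht.2 i).2])
  have hfactor_nonneg : ∀ i ∈ univ, 0 ≤ sin (t i) ^ a * sin (2 * t i) ^ b := fun i _ =>
    mul_nonneg (rpow_nonneg (hsin i) a) (rpow_nonneg (hsin_two i) b)
  have hgap_nonneg := sub_nonneg_of_mem_filter_lt (monotone_cos_two_mul_of_mem_trigAlcove ht)
  have hfactors : ∏ i, (sin (t i) ^ a * sin (2 * t i) ^ b) = (2 ^ (-(a / 2))) ^ N *
      ∏ i, ((1 - cos (2 * t i)) ^ ((a + b) / 2) * (1 + cos (2 * t i)) ^ (b / 2)) := by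
    simp only [sin_rpow_mul_sin_two_mul_rpow hab (ht.2 _), prod_mul_distrib, prod_const, card_univ,
      Fintype.card_fin]
  rw [jacobiProduct, mul_left_comm, ← hfactors, mul_rpow (prod_nonneg hgap_nonneg)
    (prod_nonneg hfactor_nonneg), ← finsetProd_rpow _ _ hgap_nonneg,
    ← finsetProd_rpow _ _ hfactor_nonneg, trigJacobiWeight]
  congr 1
  refine prod_congr rfl fun i _ => ?_
  rw [mul_rpow (rpow_nonneg (hsin i) a) (rpow_nonneg (hsin_two i) b), ← rpow_mul (hsin i),
    ← rpow_mul (hsin_two i), mul_comm a, mul_comm b]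

end TrigonometricCoordinates

theorem tendsto_setIntegral_sdiff_trigJacobiWeight_div_of_isJacobiEquilibrium {N : ℕ} {a b : ℝ}
    {z : Fin N → ℝ} (hab : 0 < a + b) (hb : 0 < b)
    (hequi : IsJacobiEquilibrium ((a + b) / 2) (b / 2) z) (hz : StrictMono z)
    (hmem : ∀ i, z i ∈ Set.Ioo (-1 : ℝ) 1) {U : Set (Fin N → ℝ)}
    (hU : U ∈ 𝓝 fun i => arccos (z i) / 2) (hUm : MeasurableSet U) :
    Tendsto (fun κ : ℝ => (∫ t in trigAlcove N \ U, trigJacobiWeight a b κ t) /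
      ∫ t in trigAlcove N, trigJacobiWeight a b κ t) atTop (𝓝 0) := by
  set scale : ℝ := (2 ^ (-(a / 2))) ^ N
  have hscale : 0 < scale := by positivity
  set density : (Fin N → ℝ) → ℝ := fun t =>
    scale * jacobiProduct ((a + b) / 2) (b / 2) fun i => cos (2 * t i)
  have hdensity_cont : Continuous density :=
    continuous_const.mul ((continuous_jacobiProduct (by positivity) (by positivity)).comp
      (by fun_prop))
  have hcos_mem (t : Fin N → ℝ) (i : Fin N) : cos (2 * t i) ∈ Set.Icc (-1 : ℝ) 1 := cos_mem_Icc _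
  have hdensity_nonneg : ∀ t ∈ trigAlcove N, 0 ≤ density t := fun t ht => mul_nonneg hscale.le
    (jacobiProduct_nonneg (monotone_cos_two_mul_of_mem_trigAlcove ht) (hcos_mem t))
  have hdensity_equi : density (fun i => arccos (z i) / 2) =
      scale * jacobiProduct ((a + b) / 2) (b / 2) z := by
    simp only [density, cos_two_mul_arccos_div_two (Set.Ioo_subset_Icc_self (hmem _))]
  have hdensity_max : ∀ t ∈ trigAlcove N, t ≠ (fun i => arccos (z i) / 2) →
      density t < density fun i => arccos (z i) / 2 := fun t ht hne => by
    rw [hdensity_equi]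
    refine mul_lt_mul_of_pos_left (hequi.jacobiProduct_lt (by positivity) (by positivity) hz hmem
      (monotone_cos_two_mul_of_mem_trigAlcove ht) (hcos_mem t) ?_) hscale
    rintro rfl
    exact hne (arccos_cos_two_mul_of_mem_trigAlcove ht).symm
  have hratio := tendsto_setIntegral_sdiff_rpow_div_of_unique_maximum (μ := volume)
    isCompact_trigAlcove (subset_closure (arccos_div_two_mem_interior_trigAlcove hz hmem)) hU hUm
    hdensity_cont.continuousOn hdensity_nonneg
    (hdensity_equi ▸ mul_pos hscale (jacobiProduct_pos hz hmem)) hdensity_max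
  have hAm : MeasurableSet (trigAlcove N) := isCompact_trigAlcove.measurableSet
  refine hratio.congr fun κ => ?_
  rw [setIntegral_congr_fun (hAm.diff hUm) fun t ht => trigJacobiWeight_eq_rpow hab.ne' ht.1 κ,
    setIntegral_congr_fun hAm fun t ht => trigJacobiWeight_eq_rpow hab.ne' ht κ]

theorem trig_jacobi_ensemble_convergence_in_probability_general {N : ℕ} {a b : ℝ}
    (hab : 0 < a + b) (hb : 0 < b) {P : Polynomial ℝ} (hdeg : P.natDegree = N)
    (horth : ∀ Q : Polynomial ℝ, Q.natDegree < N →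
      ∫ x in Set.Ioo (-1 : ℝ) 1,
        P.eval x * Q.eval x * (1 - x) ^ (a + b - 1) * (1 + x) ^ (b - 1) = 0)
    {z : Fin N → ℝ} (hz : StrictMono z) (hroot : ∀ i, P.eval (z i) = 0)
    (hmem : ∀ i, z i ∈ Set.Ioo (-1 : ℝ) 1) {ε : ℝ} (hε : 0 < ε) :
    Tendsto (fun κ : ℝ =>
      (∫ t in {t ∈ trigAlcove N | ε < dist t (fun i => arccos (z i) / 2)},
        trigJacobiWeight a b κ t) / ∫ t in trigAlcove N, trigJacobiWeight a b κ t)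
      atTop (𝓝 0) := by
  have hequi : IsJacobiEquilibrium ((a + b) / 2) (b / 2) z := by
    simpa only [sub_add_cancel] using isJacobiEquilibrium_of_orthogonal (α := a + b - 1)
      (β := b - 1) (by linarith) (by linarith) hdeg (fun Q hQ => by
        simpa only [jacobiFunctional_apply, Polynomial.eval_mul, jacobiWeight, mul_assoc]
          using horth Q hQ) hz.injective hroot hmem
  have hfar : {t ∈ trigAlcove N | ε < dist t fun i => arccos (z i) / 2} =
      trigAlcove N \ Metric.closedBall (fun i => arccos (z i) / 2) ε := by
    ext t
    simp
  rw [hfar]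
  exact tendsto_setIntegral_sdiff_trigJacobiWeight_div_of_isJacobiEquilibrium hab hb hequi hz hmem
    (Metric.closedBall_mem_nhds _ hε) Metric.isClosed_closedBall.measurableSet

theorem trig_jacobi_ensemble_convergence_in_probability
    (N : ℕ) (hN : 1 ≤ N) (a b : ℝ) (ha : 0 ≤ a) (hb : 0 < b)
    (α β : ℝ) (hα : α = a + b - 1) (hβ : β = b - 1)
    (P : Polynomial ℝ) (hPdeg : P.natDegree = N)
    (hPorth : ∀ Q : Polynomial ℝ, Q.natDegree < N →
      ∫ x in Set.Ioo (-1 : ℝ) 1,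
        P.eval x * Q.eval x * (1 - x) ^ α * (1 + x) ^ β = 0)
    (hPone : P.eval 1 = (∏ j ∈ Finset.range N, (α + 1 + j)) / (N.factorial : ℝ))
    (z : Fin N → ℝ) (hzmono : StrictMono z)
    (hzroot : ∀ i, P.eval (z i) = 0)
    (hzmem : ∀ i, z i ∈ Set.Ioo (-1 : ℝ) 1)
    (At : Set (Fin N → ℝ))
    (hAt : At = {t | Antitone t ∧ ∀ i, t i ∈ Set.Icc (0 : ℝ) (π / 2)})
    (w : ℝ → (Fin N → ℝ) → ℝ)
    (hw : w = fun κ t =>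
      (∏ p ∈ Finset.univ.filter (fun p : Fin N × Fin N => p.1 < p.2),
        (Real.cos (2 * t p.2) - Real.cos (2 * t p.1)) ^ κ) *
      ∏ i, (Real.sin (t i) ^ (κ * a) * Real.sin (2 * t i) ^ (κ * b)))
    : ∀ ε : ℝ, 0 < ε →
      Tendsto (fun κ : ℝ =>
          (∫ t in {t ∈ At | ε < dist t (fun i => Real.arccos (z i) / 2)}, w κ t) /
            (∫ t in At, w κ t))
        atTop (𝓝 0) := by
  subst hα hβ hAt hw
  exact fun ε hε => trig_jacobi_ensemble_convergence_in_probability_general (by linarith) hb hPdeg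
    hPorth hzmono hzroot hzmem hε
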